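/- Let ε ∈ (0,1) be irrational with continued fraction expansion ε = [0; a_1, a_2, …], let ℓ satisfy max{ε, 1−ε} < ℓ < 1, and let x0 ∈ [0,ℓ). Then the 3iet word u_{ε,ℓ,x0} has finite index, ind(u_{ε,ℓ,x0}) < +∞, if and only if the sequence of partial quotients (a_n)_{n≥1} is bounded. -/

import Mathlib

/-- The alphabet of 3iet words. -/
inductive L3 | A | B | C
deriving DecidableEq, Inhabited

/-- The three-interval exchange transformation `T_{ε,ℓ}`. -/
noncomputable def T3 (ε ℓ : ℝ) (x : ℝ) : ℝ :=
  if x < ℓ - 1 + ε then x + 1 - ε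
  else if x < ε then x + 1 - 2*ε
  else x - ε

/-- The 3iet word `u_{ε,ℓ,x0}` coding the orbit of `x0` under `T_{ε,ℓ}`. -/
noncomputable def u3 (ε ℓ x0 : ℝ) (n : ℕ) : L3 :=
  if (T3 ε ℓ)^[n] x0 < ℓ - 1 + ε then L3.A
  else if (T3 ε ℓ)^[n] x0 < ε then L3.B
  else L3.C

/-- The two-interval exchange transformation `T_ε`. -/
noncomputable def T2 (ε : ℝ) (x : ℝ) : ℝ := if x < ε then x + 1 - ε else x - ε

/-- The Sturmian word `u_{ε,x0}` of slope `ε` coding the orbit of `x0` under `T_ε`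
(letter `0` is `false`, letter `1` is `true`). -/
noncomputable def u2 (ε x0 : ℝ) (n : ℕ) : Bool := if (T2 ε)^[n] x0 < ε then false else true

/-- `w` is a factor of the infinite word `u`. -/
def IsFactor {α : Type*} (w : List α) (u : ℕ → α) : Prop :=
  ∃ i : ℕ, w = (List.range w.length).map fun j => u (i + j)

/-- The prefix of length `m` of the periodic infinite word `www⋯`;
for `|w| ≤ m` this is the fractional power `w^{m/|w|}`. -/
def powPrefix {α : Type*} [Inhabited α] (w : List α) (m : ℕ) : List α :=
  (List.range m).map fun j => w.getD (j % w.length) default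

/-- The index of the factor `w` in the infinite word `u`:
`sup {r ∈ ℚ, r ≥ 1, r|w| ∈ ℕ | w^r is a factor of u}`, as an element of `ℝ ∪ {+∞}`. -/
noncomputable def factorIndex {α : Type*} [Inhabited α] (u : ℕ → α) (w : List α) : EReal :=
  sSup {x : EReal | ∃ m : ℕ, w.length ≤ m ∧ IsFactor (powPrefix w m) u ∧
    x = (((m : ℝ) / (w.length : ℝ) : ℝ) : EReal)}

/-- The index of the infinite word `u`: `sup {ind(w) | w a nonempty factor of u}`. -/
noncomputable def wordIndex {α : Type*} [Inhabited α] (u : ℕ → α) : EReal :=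
  sSup {x : EReal | ∃ w : List α, w ≠ [] ∧ IsFactor w u ∧ x = factorIndex u w}

/-- The Gauss map `x ↦ {1/x}`. -/
noncomputable def gaussMap (x : ℝ) : ℝ := Int.fract x⁻¹

/-- `cfa ε n` is the partial quotient `a_{n+1}` of the continued fraction
expansion `ε = [0; a₁, a₂, a₃, …]` of the irrational `ε ∈ (0,1)`. -/
noncomputable def cfa (ε : ℝ) (n : ℕ) : ℕ := ⌊(gaussMap^[n] ε)⁻¹⌋₊

/-- The morphism `σ01 : A ↦ 0, B ↦ 01, C ↦ 1`. -/
def sigma01 : L3 → List Bool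
  | L3.A => [false]
  | L3.B => [false, true]
  | L3.C => [true]

/-- The morphism `σ10 : A ↦ 0, B ↦ 10, C ↦ 1`. -/
def sigma10 : L3 → List Bool
  | L3.A => [false]
  | L3.B => [true, false]
  | L3.C => [true]

/-- The image `φ(u₀)φ(u₁)φ(u₂)⋯` of an infinite word `u` under a (nonerasing) morphism `φ`. -/
def morphWord (φ : L3 → List Bool) (u : ℕ → L3) (m : ℕ) : Bool :=
  ((List.range (m+1)).flatMap fun k => φ (u k)).getD m false

/-- `u` is a uniformly recurrent infinite word: every factor occurs infinitely often
with bounded gaps (every window of some length `R` contains an occurrence). -/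
def UniformlyRecurrent {α : Type*} (u : ℕ → α) : Prop :=
  ∀ w : List α, IsFactor w u → ∃ R : ℕ, ∀ i : ℕ, ∃ j : ℕ, i ≤ j ∧ j < i + R ∧
    w = (List.range w.length).map fun t => u (j + t)

/-- `u` is eventually periodic. -/
def EventuallyPeriodic {α : Type*} (u : ℕ → α) : Prop :=
  ∃ N p : ℕ, 0 < p ∧ ∀ n : ℕ, N ≤ n → u (n + p) = u n

/-- The standard words of `ε = [0; a₁, a₂, …]`, with the index shifted by one:
`sw ε 0 = s₋₁ = 1`, `sw ε 1 = s₀ = 0`, `sw ε 2 = s₁ = s₀^{a₁-1} s₋₁`, and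
`sw ε (n+3) = s_{n+2} = s_{n+1}^{a_{n+2}} s_n`. -/
noncomputable def sw (ε : ℝ) : ℕ → List Bool
  | 0 => [true]
  | 1 => [false]
  | 2 => (List.replicate (cfa ε 0 - 1) ([false] : List Bool)).flatten ++ [true]
  | (n+3) => (List.replicate (cfa ε (n+1)) (sw ε (n+2))).flatten ++ sw ε (n+1)

/-- Denominators of the convergents of `ε`, shifted by one: `qq ε 0 = q₋₁ = 0`,
`qq ε 1 = q₀ = 1`, and `qq ε (n+2) = q_{n+1} = a_{n+1} q_n + q_{n-1}`. -/
noncomputable def qq (ε : ℝ) : ℕ → ℕ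
  | 0 => 0
  | 1 => 1
  | (n+2) => cfa ε n * qq ε (n+1) + qq ε n

/-- `u` is a 3iet word. -/
def Is3ietWord (u : ℕ → L3) : Prop :=
  ∃ ε ℓ x0 : ℝ, Irrational ε ∧ 0 < ε ∧ ε < 1 ∧ max ε (1 - ε) < ℓ ∧ ℓ < 1 ∧
    x0 ∈ Set.Ico 0 ℓ ∧ u = u3 ε ℓ x0

/-- `v` is a Sturmian word. -/
def IsSturmianWord (v : ℕ → Bool) : Prop :=
  ∃ ε x0 : ℝ, Irrational ε ∧ 0 < ε ∧ ε < 1 ∧ x0 ∈ Set.Ico (0:ℝ) 1 ∧ v = u2 ε x0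

/-- The infinite binary word `v1` is amicable with `v2` (`v1 ∝ v2`). -/
def AmicableInf (v1 v2 : ℕ → Bool) : Prop :=
  ∃ w : ℕ → L3, v1 = morphWord sigma01 w ∧ v2 = morphWord sigma10 w

/-- The morphism `Φ_k : A ↦ 0, B ↦ 01^{k+1}, C ↦ 01^k`. -/
def Phi (k : ℕ) : L3 → List Bool
  | L3.A => [false]
  | L3.B => false :: List.replicate (k+1) true
  | L3.C => false :: List.replicate k true

/-- The infinite word `B₀B₁B₂⋯` obtained by concatenating the sequence of
(nonempty) blocks `B`. -/
def concatOfBlocks (B : ℕ → List Bool) (m : ℕ) : Bool :=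
  ((List.range (m+1)).flatMap B).getD m false

/-!
`T_{ε,ℓ}` is the first return map to `[0, ℓ)` of the rotation `T_ε : x ↦ x - ε mod 1`, a step coded
by `B` taking two rotation steps and every other step one.

If the partial quotients are bounded by `K`, then `ε` is badly approximable: `q ‖q ε‖ ≥ c` with
`c = 1 / (2 (K + 1))`. The starting points of the successive copies of a block of length `p` form
an arithmetic progression whose difference is `m - q ε` with `m` an integer and `p ≤ q ≤ 2p`, hence
at least `c / (2p)` in absolute value. These points are coded alike for `p` steps; since the
multiples `t ε` with `t ≤ p` are `3 / (c p)`-dense modulo `1`, such points are `3 / (c p)`-close.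
So there are at most about `6 / c²` copies.

Conversely, shifting time by a denominator `q_n` moves the rotation orbit by `|q_n ε - p_n|`. By
best approximation such a shift crosses a given threshold at most once in `q_{n+1}` steps, so some
window of length about `q_{n+1} / 5` contains no crossing of the endpoints `0`, `ℓ - 1 + ε`, `ε`
and `ℓ`. The word is periodic there with a period at most `q_n`, and `q_{n+1} / q_n ≥ a_{n+1}`.
-/

/-! ### Convergents -/

variable {ε : ℝ}

lemma mul_gaussMap {x : ℝ} (hx : 0 < x) : x * gaussMap x = 1 - ⌊x⁻¹⌋₊ * x := by
  rw [gaussMap, Int.fract, ← natCast_floor_eq_intCast_floor (inv_pos.mpr hx).le, mul_sub,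
    mul_inv_cancel₀ hx.ne', mul_comm x]

lemma irrational_gaussMap_iterate (hε : Irrational ε) (n : ℕ) : Irrational (gaussMap^[n] ε) := by
  induction n with
  | zero => exact hε
  | succ n ih =>
    rw [Function.iterate_succ_apply']
    exact (irrational_inv_iff.mpr ih).sub_intCast _

lemma gaussMap_iterate_pos (hε : Irrational ε) (h0 : 0 < ε) (n : ℕ) : 0 < gaussMap^[n] ε := by
  cases n with
  | zero => exact h0
  | succ n =>
    have hne := (irrational_gaussMap_iterate hε (n + 1)).ne_zero
    rw [Function.iterate_succ_apply'] at hne ⊢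
    exact (Int.fract_nonneg _).lt_of_ne' hne

lemma gaussMap_iterate_lt_one (h1 : ε < 1) (n : ℕ) : gaussMap^[n] ε < 1 := by
  cases n with
  | zero => exact h1
  | succ n =>
    rw [Function.iterate_succ_apply']
    exact Int.fract_lt_one _

lemma one_le_cfa (hε : Irrational ε) (h0 : 0 < ε) (h1 : ε < 1) (n : ℕ) : 1 ≤ cfa ε n := by
  rw [cfa, Nat.one_le_floor_iff, one_le_inv₀ (gaussMap_iterate_pos hε h0 n)]
  exact (gaussMap_iterate_lt_one h1 n).le

/-- Numerators of the convergents of `ε`, with the index shift of `qq`: `convergentNum ε n` is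
`p_{n-1}`. -/
noncomputable def convergentNum (ε : ℝ) : ℕ → ℤ
  | 0 => 1
  | 1 => 0
  | n + 2 => cfa ε n * convergentNum ε (n + 1) + convergentNum ε n

/-- The approximation error `|q_{n-1} ε - p_{n-1}|` of a convergent of `ε`, written as a product of
iterates of the Gauss map. -/
noncomputable def convergentErr (ε : ℝ) (n : ℕ) : ℝ :=
  ∏ i ∈ Finset.range n, gaussMap^[i] ε

lemma convergentErr_succ (n : ℕ) :
    convergentErr ε (n + 1) = convergentErr ε n * gaussMap^[n] ε :=
  Finset.prod_range_succ _ n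

lemma convergentErr_pos (hε : Irrational ε) (h0 : 0 < ε) (n : ℕ) : 0 < convergentErr ε n :=
  Finset.prod_pos fun i _ => gaussMap_iterate_pos hε h0 i

lemma convergentErr_succ_lt (hε : Irrational ε) (h0 : 0 < ε) (h1 : ε < 1) (n : ℕ) :
    convergentErr ε (n + 1) < convergentErr ε n := by
  rw [convergentErr_succ]
  exact mul_lt_of_lt_one_right (convergentErr_pos hε h0 n) (gaussMap_iterate_lt_one h1 n)

lemma convergentErr_add_two (hε : Irrational ε) (h0 : 0 < ε) (n : ℕ) :
    convergentErr ε (n + 2) = convergentErr ε n - cfa ε n * convergentErr ε (n + 1) := by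
  have hstep := mul_gaussMap (gaussMap_iterate_pos hε h0 n)
  simp only [convergentErr_succ, Function.iterate_succ_apply', cfa]
  linear_combination convergentErr ε n * hstep

lemma qq_mul_sub_convergentNum (hε : Irrational ε) (h0 : 0 < ε) (n : ℕ) :
    qq ε n * ε - convergentNum ε n = (-1) ^ (n + 1) * convergentErr ε n := by
  induction n using Nat.twoStepInduction with
  | zero => simp [qq, convergentNum, convergentErr]
  | one => simp [qq, convergentNum, convergentErr]
  | more n ih ih' =>
    rw [convergentErr_add_two hε h0, qq, convergentNum]
    push_cast
    linear_combination (cfa ε n : ℝ) * ih' + ih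

lemma abs_convergentNum_sub (hε : Irrational ε) (h0 : 0 < ε) (n : ℕ) :
    |convergentNum ε n - qq ε n * ε| = convergentErr ε n := by
  rw [abs_sub_comm, qq_mul_sub_convergentNum hε h0, abs_mul, abs_neg_one_pow, one_mul,
    abs_of_pos (convergentErr_pos hε h0 n)]

lemma qq_mul_convergentNum_sub (n : ℕ) :
    (qq ε (n + 1) : ℤ) * convergentNum ε n - qq ε n * convergentNum ε (n + 1) = (-1) ^ n := by
  induction n with
  | zero => simp [qq, convergentNum]
  | succ n ih =>
    simp only [qq, convergentNum]
    push_cast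
    rw [pow_succ, ← ih]
    ring

lemma qq_mul_convergentErr_add (hε : Irrational ε) (h0 : 0 < ε) (n : ℕ) :
    qq ε (n + 1) * convergentErr ε n + qq ε n * convergentErr ε (n + 1) = 1 := by
  induction n with
  | zero => simp [qq, convergentErr]
  | succ n ih =>
    rw [convergentErr_add_two hε h0, qq]
    push_cast
    linear_combination ih

lemma qq_le_succ (hε : Irrational ε) (h0 : 0 < ε) (h1 : ε < 1) (n : ℕ) :
    qq ε n ≤ qq ε (n + 1) := by
  cases n with
  | zero => simp [qq]
  | succ n =>
    exact (Nat.le_mul_of_pos_left _ (one_le_cfa hε h0 h1 n)).trans (Nat.le_add_right _ _)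

lemma qq_succ_pos (hε : Irrational ε) (h0 : 0 < ε) (h1 : ε < 1) (n : ℕ) : 0 < qq ε (n + 1) := by
  induction n with
  | zero => simp [qq]
  | succ n ih => exact ih.trans_le (qq_le_succ hε h0 h1 (n + 1))

lemma le_qq_succ (hε : Irrational ε) (h0 : 0 < ε) (h1 : ε < 1) (n : ℕ) : n ≤ qq ε (n + 1) := by
  induction n using Nat.twoStepInduction with
  | zero => exact Nat.zero_le _
  | one => exact qq_succ_pos hε h0 h1 1
  | more n _ ih =>
    have hle := Nat.le_mul_of_pos_left (qq ε (n + 2)) (one_le_cfa hε h0 h1 (n + 1))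
    exact Nat.add_le_add (c := 1) (ih.trans hle) (qq_succ_pos hε h0 h1 n)

lemma exists_qq_le_lt (hε : Irrational ε) (h0 : 0 < ε) (h1 : ε < 1) {q : ℕ} (hq : 0 < q) :
    ∃ n, qq ε (n + 1) ≤ q ∧ q < qq ε (n + 2) := by
  by_contra! hstep
  have hbdd : ∀ n, qq ε (n + 1) ≤ q := Nat.rec hq hstep
  exact (le_qq_succ hε h0 h1 (q + 1)).not_gt (Nat.lt_succ_of_le (hbdd (q + 1)))

/-! ### Best and bad approximation -/

lemma exists_eq_convergent_combination (n : ℕ) (t s : ℤ) :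
    ∃ x y : ℤ, t = x * qq ε n + y * qq ε (n + 1) ∧
      s = x * convergentNum ε n + y * convergentNum ε (n + 1) := by
  have hdet := qq_mul_convergentNum_sub (ε := ε) n
  have hsq : ((-1 : ℤ) ^ n) * (-1) ^ n = 1 := by rw [← mul_pow]; simp
  refine ⟨(-1) ^ n * (s * qq ε (n + 1) - t * convergentNum ε (n + 1)),
    (-1) ^ n * (t * convergentNum ε n - s * qq ε n), ?_, ?_⟩
  · linear_combination -t * hsq - (-1) ^ n * t * hdet
  · linear_combination -s * hsq - (-1) ^ n * s * hdet

lemma ne_zero_and_mul_nonpos_of_combination_lt {a b x y : ℤ} (ha : 0 ≤ a)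
    (hpos : 0 < x * a + y * b) (hlt : x * a + y * b < b) : x ≠ 0 ∧ x * y ≤ 0 := by
  rcases lt_trichotomy y 0 with hy | rfl | hy
  · have hx : 0 < x := by
      by_contra! hx
      nlinarith
    exact ⟨hx.ne', (mul_neg_of_pos_of_neg hx hy).le⟩
  · exact ⟨by rintro rfl; simp at hpos, by simp⟩
  · have hx : x < 0 := by
      by_contra! hx
      nlinarith
    exact ⟨hx.ne, (mul_neg_of_neg_of_pos hx hy).le⟩

lemma le_abs_mul_sub_mul_of_mul_nonpos {x y : ℤ} (hx : x ≠ 0) (hxy : x * y ≤ 0) {d d' : ℝ}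
    (hd : 0 ≤ d) (hd' : 0 ≤ d') : d ≤ |x * d - y * d'| := by
  rcases hx.lt_or_gt with hx | hx
  · have hy : (0 : ℝ) ≤ y := by exact_mod_cast nonneg_of_mul_nonpos_right hxy hx
    have hx' : (x : ℝ) ≤ -1 := by exact_mod_cast Int.le_sub_one_of_lt hx
    exact le_trans (by nlinarith) (neg_le_abs _)
  · have hy : (y : ℝ) ≤ 0 := by exact_mod_cast nonpos_of_mul_nonpos_right hxy hx
    have hx' : (1 : ℝ) ≤ x := by exact_mod_cast hx
    exact le_trans (by nlinarith) (le_abs_self _)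

/-- The best approximation property of the convergents. Expressing `(t, s)` in the unimodular basis
of two consecutive convergents, whose errors have opposite signs, leaves no room for
cancellation. -/
lemma convergentErr_le_abs_mul_sub (hε : Irrational ε) (h0 : 0 < ε) (n : ℕ) {t : ℕ} (s : ℤ)
    (ht : 0 < t) (htq : t < qq ε (n + 1)) : convergentErr ε n ≤ |t * ε - s| := by
  obtain ⟨x, y, htxy, rfl⟩ := exists_eq_convergent_combination (ε := ε) n t s
  obtain ⟨hx, hxy⟩ := ne_zero_and_mul_nonpos_of_combination_lt (a := qq ε n) (b := qq ε (n + 1))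
    (x := x) (y := y) (by positivity) (by omega) (by omega)
  have hval : t * ε - ((x * convergentNum ε n + y * convergentNum ε (n + 1) : ℤ) : ℝ) =
      (-1) ^ (n + 1) * (x * convergentErr ε n - y * convergentErr ε (n + 1)) := by
    have htxy' : (t : ℝ) = x * qq ε n + y * qq ε (n + 1) := by exact_mod_cast htxy
    rw [htxy']
    push_cast
    linear_combination x * qq_mul_sub_convergentNum hε h0 n +
      y * qq_mul_sub_convergentNum hε h0 (n + 1)
  rw [hval, abs_mul, abs_neg_one_pow, one_mul]
  exact le_abs_mul_sub_mul_of_mul_nonpos hx hxy (convergentErr_pos hε h0 n).le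
    (convergentErr_pos hε h0 (n + 1)).le

/-- `ε` is badly approximable with constant `c`, that is, `q ‖q ε‖ ≥ c` for all `q ≥ 1`, where `‖·‖`
is the distance to the nearest integer. -/
def IsBadlyApproximable (c ε : ℝ) : Prop :=
  ∀ (q : ℕ) (s : ℤ), 0 < q → c / q ≤ |q * ε - s|

lemma one_div_two_mul_qq_le_convergentErr (hε : Irrational ε) (h0 : 0 < ε) (h1 : ε < 1) (n : ℕ) :
    1 / (2 * qq ε (n + 1)) ≤ convergentErr ε n := by
  have hq : (0 : ℝ) < qq ε (n + 1) := by exact_mod_cast qq_succ_pos hε h0 h1 n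
  have hmul : qq ε n * convergentErr ε (n + 1) ≤ qq ε (n + 1) * convergentErr ε n :=
    mul_le_mul (by exact_mod_cast qq_le_succ hε h0 h1 n) (convergentErr_succ_lt hε h0 h1 n).le
      (convergentErr_pos hε h0 _).le hq.le
  rw [div_le_iff₀ (by positivity)]
  linarith [qq_mul_convergentErr_add hε h0 n]

lemma qq_add_two_le_of_cfa_le (hε : Irrational ε) (h0 : 0 < ε) (h1 : ε < 1) {n K : ℕ}
    (hK : cfa ε n ≤ K) : qq ε (n + 2) ≤ (K + 1) * qq ε (n + 1) := by
  rw [qq, add_one_mul]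
  exact Nat.add_le_add (Nat.mul_le_mul_right _ hK) (qq_le_succ hε h0 h1 n)

lemma isBadlyApproximable_of_cfa_le (hε : Irrational ε) (h0 : 0 < ε) (h1 : ε < 1) {K : ℕ}
    (hK : ∀ n, cfa ε n ≤ K) : IsBadlyApproximable (1 / (2 * (K + 1))) ε := by
  intro q s hq
  obtain ⟨n, hqn, hqn'⟩ := exists_qq_le_lt hε h0 h1 hq
  have hpos : (0 : ℝ) < qq ε (n + 2) := by exact_mod_cast qq_succ_pos hε h0 h1 (n + 1)
  have hgrowth : (qq ε (n + 2) : ℝ) ≤ (K + 1) * q := by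
    exact_mod_cast (qq_add_two_le_of_cfa_le hε h0 h1 (hK n)).trans (Nat.mul_le_mul_left _ hqn)
  calc 1 / (2 * (K + 1)) / (q : ℝ) = 1 / (2 * ((K + 1) * q)) := by rw [div_div, mul_assoc]
    _ ≤ 1 / (2 * qq ε (n + 2)) := by gcongr
    _ ≤ convergentErr ε (n + 1) := one_div_two_mul_qq_le_convergentErr hε h0 h1 (n + 1)
    _ ≤ |q * ε - s| := convergentErr_le_abs_mul_sub hε h0 (n + 1) s hq hqn'

/-! ### Density of the multiples of a badly approximable number -/

lemma exists_nat_mul_rat_eq_div_add_int (r : ℚ) (k : ℤ) :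
    ∃ t : ℕ, t < r.den ∧ ∃ m : ℤ, (t : ℝ) * r = k / r.den + m := by
  have hden : (0 : ℤ) < r.den := by exact_mod_cast r.pos
  obtain ⟨x, y, hxy⟩ : IsCoprime r.num (r.den : ℤ) :=
    Int.isCoprime_iff_nat_coprime.mpr (by simpa using r.reduced)
  have hnonneg := Int.emod_nonneg (k * x) hden.ne'
  have hlt := Int.emod_lt_of_pos (k * x) hden
  refine ⟨((k * x) % r.den).toNat, by omega, -(k * y) - (k * x) / r.den * r.num, ?_⟩
  have hmul : (((k * x) % r.den).toNat : ℤ) * r.num =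
      k + (-(k * y) - (k * x) / r.den * r.num) * r.den := by
    rw [Int.toNat_of_nonneg hnonneg]
    linear_combination r.num * Int.emod_add_mul_ediv (k * x) r.den + k * hxy
  have hden' : (r.den : ℝ) ≠ 0 := by exact_mod_cast hden.ne'
  rw [Rat.cast_def, ← mul_div_assoc, div_eq_iff hden', add_mul, div_mul_cancel₀ _ hden']
  exact_mod_cast hmul

/-- The multiples of `r` hit every point of `(1 / r.den) ℤ` modulo `1`, and those of `ε` follow
them at distance at most `1 / r.den`. -/
lemma exists_nat_mul_add_int_mem_Ioc {r : ℚ} (hr : |ε - r| ≤ 1 / (r.den : ℝ) ^ 2) {a b : ℝ}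
    (hab : 3 / r.den ≤ b - a) :
    ∃ t : ℕ, t < r.den ∧ ∃ m : ℤ, t * ε + m ∈ Set.Ioc a b := by
  have hden : (0 : ℝ) < r.den := by exact_mod_cast r.pos
  set k : ℤ := ⌊r.den * b⌋ - 1 with hk
  obtain ⟨t, ht, m, htm⟩ := exists_nat_mul_rat_eq_div_add_int r k
  have hupper : (k : ℝ) / r.den + 1 / r.den ≤ b := by
    rw [← add_div, div_le_iff₀ hden, hk]
    push_cast
    linarith [Int.floor_le (r.den * b)]
  have hlower : b - 2 / r.den < (k : ℝ) / r.den := by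
    rw [sub_lt_iff_lt_add, ← add_div, lt_div_iff₀ hden, hk]
    push_cast
    linarith [Int.lt_floor_add_one (r.den * b)]
  have hclose : |t * ε - t * r| ≤ 1 / r.den := by
    rw [← mul_sub, abs_mul, Nat.abs_cast]
    calc (t : ℝ) * |ε - r| ≤ r.den * (1 / (r.den : ℝ) ^ 2) := by gcongr
      _ = 1 / r.den := by field_simp
  obtain ⟨hclose₁, hclose₂⟩ := abs_le.mp hclose
  have h2 : (2 : ℝ) / r.den = 2 * (1 / r.den) := by ring
  have h3 : (3 : ℝ) / r.den = 3 * (1 / r.den) := by ring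
  exact ⟨t, ht, -m, by push_cast; constructor <;> linarith⟩

lemma IsBadlyApproximable.mul_le_den {c : ℝ} (hbad : IsBadlyApproximable c ε) {p : ℕ} {r : ℚ}
    (hr : |ε - r| ≤ 1 / ((p + 1) * r.den)) : c * (p + 1) ≤ r.den := by
  have hden : (0 : ℝ) < r.den := by exact_mod_cast r.pos
  have hle : c / r.den ≤ 1 / (p + 1) := by
    calc c / r.den ≤ |r.den * ε - r.num| := hbad r.den r.num r.pos
      _ = r.den * |ε - r| := by
        rw [← abs_of_pos hden, ← abs_mul, abs_of_pos hden, mul_sub, Rat.cast_def,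
          mul_div_cancel₀ _ hden.ne']
      _ ≤ r.den * (1 / ((p + 1) * r.den)) := by gcongr
      _ = 1 / (p + 1) := by field_simp
  rwa [div_le_div_iff₀ hden (by positivity), one_mul] at hle

lemma IsBadlyApproximable.exists_nat_mul_add_int_mem_Ioc {c : ℝ} (hbad : IsBadlyApproximable c ε)
    (hc : 0 < c) {p : ℕ} (hp : 0 < p) {a b : ℝ} (hab : 3 / (c * p) ≤ b - a) :
    ∃ t : ℕ, t ≤ p ∧ ∃ m : ℤ, t * ε + m ∈ Set.Ioc a b := by
  obtain ⟨r, hr, hrp⟩ := Real.exists_rat_abs_sub_le_and_den_le ε hp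
  have hrp' : (r.den : ℝ) ≤ p := by exact_mod_cast hrp
  have hsq : |ε - r| ≤ 1 / (r.den : ℝ) ^ 2 := by
    refine hr.trans (one_div_le_one_div_of_le (by positivity) ?_)
    rw [sq]
    gcongr
    linarith
  have hlen : 3 / (r.den : ℝ) ≤ b - a := by
    refine le_trans ?_ hab
    gcongr
    linarith [hbad.mul_le_den hr]
  obtain ⟨t, ht, hm⟩ := _root_.exists_nat_mul_add_int_mem_Ioc hsq hlen
  exact ⟨t, ht.le.trans hrp, hm⟩

/-! ### Shifts by a convergent -/

lemma exists_intCast_mem_Ioc_of_floor_ne {a b : ℝ} (hab : a ≤ b) (h : ⌊a⌋ ≠ ⌊b⌋) :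
    ∃ m : ℤ, (m : ℝ) ∈ Set.Ioc a b :=
  ⟨⌊b⌋, Int.floor_lt.mp ((Int.floor_mono hab).lt_of_ne h), Int.floor_le b⟩

lemma exists_int_abs_sub_sub_lt_of_floor_add_ne {x y η : ℝ} (hx : ⌊x + η⌋ ≠ ⌊x⌋)
    (hy : ⌊y + η⌋ ≠ ⌊y⌋) : ∃ k : ℤ, |x - y - k| < |η| := by
  rcases le_total 0 η with hη | hη
  · obtain ⟨m, hm, hm'⟩ := exists_intCast_mem_Ioc_of_floor_ne (le_add_of_nonneg_right hη) hx.symm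
    obtain ⟨n, hn, hn'⟩ := exists_intCast_mem_Ioc_of_floor_ne (le_add_of_nonneg_right hη) hy.symm
    refine ⟨m - n, ?_⟩
    rw [abs_of_nonneg hη, abs_lt]
    push_cast
    constructor <;> linarith
  · obtain ⟨m, hm, hm'⟩ := exists_intCast_mem_Ioc_of_floor_ne (add_le_of_nonpos_right hη) hx
    obtain ⟨n, hn, hn'⟩ := exists_intCast_mem_Ioc_of_floor_ne (add_le_of_nonpos_right hη) hy
    refine ⟨m - n, ?_⟩
    rw [abs_of_nonpos hη, abs_lt]
    push_cast
    constructor <;> linarith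

lemma fract_lt_iff_floor_sub_lt {x θ : ℝ} : Int.fract x < θ ↔ ⌊x - θ⌋ < ⌊x⌋ := by
  rw [Int.floor_lt, sub_lt_comm, Int.self_sub_floor]

lemma exists_window_forall_not {ι : Type*} [Fintype ι] {P : ι → ℕ → Prop} {Q W : ℕ}
    (hsep : ∀ i s t, s < t → P i s → P i t → Q ≤ t - s) (hW : (Fintype.card ι + 1) * W ≤ Q) :
    ∃ s, ∀ t, s ≤ t → t < s + W → ∀ i, ¬ P i t := by
  by_contra! hbad
  choose t hst hts i hP using fun k : Fin (Fintype.card ι + 1) => hbad (k * W)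
  obtain ⟨k, l, hkl, hi⟩ := Fintype.exists_ne_map_eq_of_card_lt i (by simp)
  wlog hlt : k < l generalizing k l
  · exact this l k hkl.symm hi.symm (lt_of_le_of_ne (not_lt.mp hlt) hkl.symm)
  have hk : ((k : ℕ) + 1) * W ≤ l * W := Nat.mul_le_mul_right W hlt
  have hl : ((l : ℕ) + 1) * W ≤ (Fintype.card ι + 1) * W := Nat.mul_le_mul_right W l.2
  rw [add_one_mul] at hk hl
  have htk : t k < t l := by linarith [hts k, hst l]
  have hQ := hsep (i k) (t k) (t l) htk (hP k) (hi ▸ hP l)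
  linarith [hst k, hts l, Nat.add_sub_of_le htk.le]

/-- Shifting time by `qq ε n` moves the orbit by `convergentErr ε n`, and by best approximation two
orbit points fewer than `qq ε (n + 1)` steps apart are at least that far from each other. -/
lemma le_sub_of_floor_add_ne (hε : Irrational ε) (h0 : 0 < ε) (n : ℕ) {x : ℝ} {s t : ℕ}
    (hst : s < t)
    (hs : ⌊x - s * ε + (convergentNum ε n - qq ε n * ε)⌋ ≠ ⌊x - s * ε⌋)
    (ht : ⌊x - t * ε + (convergentNum ε n - qq ε n * ε)⌋ ≠ ⌊x - t * ε⌋) :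
    qq ε (n + 1) ≤ t - s := by
  by_contra! hlt
  obtain ⟨k, hk⟩ := exists_int_abs_sub_sub_lt_of_floor_add_ne hs ht
  have hbest := convergentErr_le_abs_mul_sub hε h0 n k (Nat.sub_pos_of_lt hst) hlt
  rw [Nat.cast_sub hst.le] at hbest
  rw [abs_convergentNum_sub hε h0, show x - s * ε - (x - t * ε) - k = (t - s) * ε - k by ring] at hk
  exact hk.not_ge hbest

lemma exists_window_fract_lt_iff (hε : Irrational ε) (h0 : 0 < ε) {ι : Type*} [Fintype ι]
    (θ : ι → ℝ) (x : ℝ) {n W : ℕ} (hW : (Fintype.card ι + 2) * W ≤ qq ε (n + 1)) :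
    ∃ s, ∀ t, s ≤ t → t < s + W → ∀ i,
      (Int.fract (x - (t + qq ε n : ℕ) * ε) < θ i ↔ Int.fract (x - t * ε) < θ i) := by
  -- The extra threshold `0` detects the wraps of the rotation.
  let θ' : Option ι → ℝ := fun o => o.elim 0 θ
  obtain ⟨s, hs⟩ := exists_window_forall_not (Q := qq ε (n + 1)) (W := W)
    (P := fun o t => ⌊x - θ' o - t * ε + (convergentNum ε n - qq ε n * ε)⌋ ≠ ⌊x - θ' o - t * ε⌋)
    (fun _ _ _ hst => le_sub_of_floor_add_ne hε h0 n hst) (by simpa using hW)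
  refine ⟨s, fun t hst hts i => ?_⟩
  have hfloor (o : Option ι) : ⌊x - (t + qq ε n : ℕ) * ε - θ' o⌋ =
      ⌊x - t * ε - θ' o⌋ - convergentNum ε n := by
    rw [sub_right_comm _ _ (θ' o), sub_right_comm _ _ (θ' o), ← not_not.mp (hs t hst hts o),
      ← Int.floor_sub_intCast]
    congr 1
    push_cast
    ring
  have hzero := hfloor none
  have hi := hfloor (some i)
  simp only [θ', Option.elim_none, Option.elim_some, sub_zero] at hzero hi
  rw [fract_lt_iff_floor_sub_lt, fract_lt_iff_floor_sub_lt, hi, hzero, sub_lt_sub_iff_right]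

/-! ### Repetitions and the index -/

section Words

variable {α : Type*} {u : ℕ → α} {n p m : ℕ}

/-- The word `u` has period `p` on the window `[n, n + m)`. -/
def HasPeriodOn (u : ℕ → α) (p n m : ℕ) : Prop :=
  ∀ j, j + p < m → u (n + j + p) = u (n + j)

lemma HasPeriodOn.apply_add_mod (h : HasPeriodOn u p n m) {j : ℕ} (hj : j < m) :
    u (n + j % p) = u (n + j) := by
  induction j using Nat.strong_induction_on with
  | _ j ih =>
    rcases lt_or_ge j p with hjp | hjp
    · rw [Nat.mod_eq_of_lt hjp]
    rcases p.eq_zero_or_pos with rfl | hp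
    · rw [Nat.mod_zero]
    · rw [Nat.mod_eq_sub_mod hjp, ih (j - p) (by omega) (by omega), ← h (j - p) (by omega)]
      congr 1
      omega

lemma HasPeriodOn.apply_mul_add (h : HasPeriodOn u p n m) {a j : ℕ} (hj : a * p + j < m) :
    u (n + (a * p + j)) = u (n + j) := by
  rw [← h.apply_add_mod hj, ← h.apply_add_mod (by omega : j < m), Nat.mul_add_mod_self_right]

variable [Inhabited α]

lemma isFactor_powPrefix_iff {w : List α} :
    IsFactor (powPrefix w m) u ↔
      ∃ n, ∀ j < m, u (n + j) = w.getD (j % w.length) default := by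
  simp only [IsFactor, powPrefix, List.length_map, List.length_range, List.map_inj_left,
    List.mem_range, eq_comm]

lemma coe_div_le_wordIndex (hp : 0 < p) (hpm : p ≤ m) (h : HasPeriodOn u p n m) :
    ((m / p : ℝ) : EReal) ≤ wordIndex u := by
  set w : List α := (List.range p).map fun j => u (n + j) with hw
  have hlen : w.length = p := by simp [hw]
  have hfactor : IsFactor w u := ⟨n, by rw [hlen]⟩
  have hpow : IsFactor (powPrefix w m) u := by
    refine isFactor_powPrefix_iff.mpr ⟨n, fun j hj => ?_⟩
    rw [← h.apply_add_mod hj, hlen]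
    simp [hw, List.getD, Nat.mod_lt j hp]
  calc ((m / p : ℝ) : EReal) ≤ factorIndex u w := le_sSup ⟨m, hlen.trans_le hpm, hpow, by rw [hlen]⟩
    _ ≤ wordIndex u := le_sSup ⟨w, List.length_pos_iff.mp (hlen ▸ hp), hfactor, rfl⟩

lemma wordIndex_le_iff {C : EReal} :
    wordIndex u ≤ C ↔
      ∀ n p m, 0 < p → p ≤ m → HasPeriodOn u p n m → ((m / p : ℝ) : EReal) ≤ C := by
  refine ⟨fun hC n p m hp hpm h => (coe_div_le_wordIndex hp hpm h).trans hC, fun hC => ?_⟩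
  refine sSup_le ?_
  rintro _ ⟨w, hw, -, rfl⟩
  refine sSup_le ?_
  rintro _ ⟨m, hm, hpow, rfl⟩
  obtain ⟨n, hn⟩ := isFactor_powPrefix_iff.mp hpow
  refine hC n w.length m (List.length_pos_iff.mpr hw) hm fun j hj => ?_
  rw [add_assoc, hn _ hj, hn j (by omega), Nat.add_mod_right]

lemma wordIndex_lt_top_iff :
    wordIndex u < ⊤ ↔
      ∃ C : ℝ, ∀ n p m, 0 < p → p ≤ m → HasPeriodOn u p n m → (m / p : ℝ) ≤ C := by
  constructor
  · intro hlt
    obtain ⟨C, hC, -⟩ := EReal.lt_iff_exists_real_btwn.mp hlt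
    exact ⟨C, fun n p m hp hpm h =>
      EReal.coe_le_coe_iff.mp (wordIndex_le_iff.mp hC.le n p m hp hpm h)⟩
  · rintro ⟨C, hC⟩
    refine (wordIndex_le_iff.mpr fun n p m hp hpm h => ?_).trans_lt (EReal.coe_lt_top C)
    exact EReal.coe_le_coe_iff.mpr (hC n p m hp hpm h)

end Words

/-! ### The three-interval exchange as an induced rotation -/

variable {ℓ x y : ℝ}

/-- The letter coding the point `x` under `T_{ε,ℓ}`. -/
noncomputable def letter (ε ℓ x : ℝ) : L3 :=
  if x < ℓ - 1 + ε then L3.A else if x < ε then L3.B else L3.C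

/-- The number of steps of the rotation `T_ε` that make up one step of `T_{ε,ℓ}`. -/
def returnTime : L3 → ℕ
  | L3.A => 1
  | L3.B => 2
  | L3.C => 1

/-- The number of wraps around the circle during one step of `T_{ε,ℓ}`. -/
def wraps : L3 → ℕ
  | L3.A => 1
  | L3.B => 1
  | L3.C => 0

lemma one_le_returnTime (a : L3) : 1 ≤ returnTime a := by cases a <;> simp [returnTime]

lemma returnTime_le_two (a : L3) : returnTime a ≤ 2 := by cases a <;> simp [returnTime]

lemma eq_B_of_one_lt_returnTime {a : L3} (h : 1 < returnTime a) : a = L3.B := by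
  cases a <;> simp_all [returnTime]

lemma letter_eq_B_iff : letter ε ℓ x = L3.B ↔ ℓ - 1 + ε ≤ x ∧ x < ε := by
  unfold letter
  split_ifs with hA hB
  · simp [hA]
  · simp [not_lt.mp hA, hB]
  · simp [hB]

lemma T3_eq (ε ℓ x : ℝ) :
    T3 ε ℓ x = x + wraps (letter ε ℓ x) - returnTime (letter ε ℓ x) * ε := by
  unfold T3 letter
  split_ifs <;> simp [wraps, returnTime]

lemma u3_succ (ε ℓ x : ℝ) (n : ℕ) : u3 ε ℓ x (n + 1) = u3 ε ℓ (T3 ε ℓ x) n := rfl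

lemma u3_add (ε ℓ x : ℝ) (n j : ℕ) : u3 ε ℓ x (n + j) = u3 ε ℓ ((T3 ε ℓ)^[n] x) j := by
  simp only [u3, ← Function.iterate_add_apply, add_comm j n]

lemma mapsTo_T3 (hl : max ε (1 - ε) ≤ ℓ) (hl1 : ℓ ≤ 1) :
    Set.MapsTo (T3 ε ℓ) (Set.Ico 0 ℓ) (Set.Ico 0 ℓ) := by
  obtain ⟨hεl, hεl'⟩ := max_le_iff.mp hl
  rintro x ⟨hx0, hxl⟩
  unfold T3
  split_ifs <;> constructor <;> linarith

lemma mapsTo_T2 (h0 : 0 ≤ ε) (h1 : ε ≤ 1) : Set.MapsTo (T2 ε) (Set.Ico 0 1) (Set.Ico 0 1) := by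
  rintro x ⟨hx0, hx1⟩
  unfold T2
  split_ifs <;> constructor <;> linarith

lemma T2_iterate_eq_fract (h0 : 0 ≤ ε) (h1 : ε ≤ 1) (hx : x ∈ Set.Ico 0 1) (t : ℕ) :
    (T2 ε)^[t] x = Int.fract (x - t * ε) := by
  have hmem := (mapsTo_T2 h0 h1).iterate t hx
  refine (Int.fract_eq_iff.mpr ⟨hmem.1, hmem.2, ?_⟩).symm
  clear hmem
  induction t with
  | zero => exact ⟨0, by simp⟩
  | succ t ih =>
    obtain ⟨k, hk⟩ := ih
    rw [Function.iterate_succ_apply']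
    unfold T2 at hk ⊢
    split_ifs
    · exact ⟨k - 1, by push_cast; linear_combination hk⟩
    · exact ⟨k, by push_cast; linear_combination hk⟩

lemma T3_eq_T2_iterate (hεl : ε ≤ ℓ) (hl1 : ℓ ≤ 1) (x : ℝ) :
    T3 ε ℓ x = (T2 ε)^[returnTime (letter ε ℓ x)] x := by
  unfold T3 letter
  split_ifs with hA hB
  · simp [returnTime, T2, show x < ε by linarith]
  · simp only [returnTime, Function.iterate_succ_apply, Function.iterate_zero_apply, T2, hB,
      if_true, if_neg (show ¬ x + 1 - ε < ε by linarith)]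
    ring
  · simp [returnTime, T2, hB]

lemma u3_eq_of_letter_T2_iterate_eq (hεl : ε ≤ ℓ) (hl1 : ℓ ≤ 1) {N : ℕ}
    (h : ∀ t < 2 * N, letter ε ℓ ((T2 ε)^[t] x) = letter ε ℓ ((T2 ε)^[t] y)) :
    ∀ j < N, u3 ε ℓ x j = u3 ε ℓ y j := by
  induction N generalizing x y with
  | zero => simp
  | succ N ih =>
    have hfirst : letter ε ℓ x = letter ε ℓ y := h 0 (by omega)
    rintro (_ | j) hj
    · exact hfirst
    rw [u3_succ, u3_succ]
    refine ih (fun t ht => ?_) j (by omega)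
    have htwo := returnTime_le_two (letter ε ℓ y)
    rw [T3_eq_T2_iterate hεl hl1, T3_eq_T2_iterate hεl hl1, hfirst,
      ← Function.iterate_add_apply, ← Function.iterate_add_apply]
    exact h _ (by omega)

lemma exists_T3_iterate_eq_T2_iterate (hεl : ε ≤ ℓ) (hl1 : ℓ ≤ 1) {t : ℕ}
    (ht : (T2 ε)^[t] x < ℓ) : ∃ n ≤ t, t ≤ 2 * n ∧ (T3 ε ℓ)^[n] x = (T2 ε)^[t] x := by
  induction t using Nat.strong_induction_on generalizing x with
  | _ t ih =>
    have hone := one_le_returnTime (letter ε ℓ x)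
    have htwo := returnTime_le_two (letter ε ℓ x)
    rcases le_or_gt (returnTime (letter ε ℓ x)) t with hle | hlt
    · obtain ⟨s, rfl⟩ := Nat.exists_eq_add_of_le' hle
      rw [Function.iterate_add_apply, ← T3_eq_T2_iterate hεl hl1] at ht ⊢
      obtain ⟨n, hns, hsn, hn⟩ := ih s (by omega) ht
      exact ⟨n + 1, by omega, by omega, hn⟩
    rcases t.eq_zero_or_pos with rfl | hpos
    · exact ⟨0, le_rfl, le_rfl, rfl⟩
    obtain rfl : t = 1 := by omega
    obtain ⟨hge, hxε⟩ := letter_eq_B_iff.mp (eq_B_of_one_lt_returnTime hlt)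
    rw [Function.iterate_one, T2, if_pos hxε] at ht
    linarith

/-! ### Long repetitions from large partial quotients -/

lemma T2_lt_of_le (hl : max ε (1 - ε) ≤ ℓ) (hx : x < 1) (hlx : ℓ ≤ x) : T2 ε x < ℓ := by
  obtain ⟨hεl, hεl'⟩ := max_le_iff.mp hl
  rw [T2, if_neg (hεl.trans hlx).not_gt]
  linarith

lemma exists_T2_iterate_lt (hl : max ε (1 - ε) ≤ ℓ) (hl1 : ℓ ≤ 1)
    (hx : x ∈ Set.Ico 0 1) (s : ℕ) :
    ∃ t, s ≤ t ∧ t ≤ s + 1 ∧ (T2 ε)^[t] x < ℓ := by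
  have hmem := (mapsTo_T2 (by linarith [le_of_max_le_right hl])
    ((le_of_max_le_left hl).trans hl1)).iterate s hx
  rcases lt_or_ge ((T2 ε)^[s] x) ℓ with hlt | hge
  · exact ⟨s, le_rfl, by omega, hlt⟩
  · refine ⟨s + 1, by omega, le_rfl, ?_⟩
    rw [Function.iterate_succ_apply']
    exact T2_lt_of_le hl hmem.2 hge

lemma exists_window_T2_iterate_lt_iff (hε : Irrational ε) (h0 : 0 < ε) (h1 : ε ≤ 1) (ℓ : ℝ)
    (hx : x ∈ Set.Ico 0 1) {n W : ℕ} (hW : 5 * W ≤ qq ε (n + 1)) :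
    ∃ s, ∀ t, s ≤ t → t < s + W →
      letter ε ℓ ((T2 ε)^[t + qq ε n] x) = letter ε ℓ ((T2 ε)^[t] x) ∧
      ((T2 ε)^[t + qq ε n] x < ℓ ↔ (T2 ε)^[t] x < ℓ) := by
  obtain ⟨s, hs⟩ := exists_window_fract_lt_iff hε h0 ![ℓ - 1 + ε, ε, ℓ] x (W := W) (n := n)
    (by simpa using hW)
  simp only [← T2_iterate_eq_fract h0.le h1 hx] at hs
  refine ⟨s, fun t hst hts => ⟨?_, hs t hst hts 2⟩⟩
  have hA := hs t hst hts 0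
  have hB := hs t hst hts 1
  simp only [Matrix.cons_val] at hA hB
  simp only [letter, hA, hB]

lemma exists_hasPeriodOn_of_le_cfa (hε : Irrational ε) (h0 : 0 < ε) (h1 : ε < 1)
    (hl : max ε (1 - ε) ≤ ℓ) (hl1 : ℓ ≤ 1) (hx : x ∈ Set.Ico 0 1) {n M : ℕ}
    (hM : 10 * (M + 1) ≤ cfa ε n) :
    ∃ i p, 0 < p ∧ HasPeriodOn (u3 ε ℓ x) p i ((M + 1) * p) := by
  have hεl := le_of_max_le_left hl
  set q := qq ε (n + 1)
  have hqpos : 0 < q := qq_succ_pos hε h0 h1 n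
  have hW : 5 * (2 * (M * q) + 2) ≤ qq ε (n + 2) := by
    rw [qq]
    nlinarith [Nat.mul_le_mul_right q hM]
  obtain ⟨s, hs⟩ := exists_window_T2_iterate_lt_iff hε h0 h1.le ℓ hx hW
  obtain ⟨t₀, hst₀, ht₀s, ht₀⟩ := exists_T2_iterate_lt hl hl1 hx s
  obtain ⟨i, -, -, hi⟩ := exists_T3_iterate_eq_T2_iterate hεl hl1 ht₀
  have hvisit : (T2 ε)^[q] ((T2 ε)^[t₀] x) < ℓ := by
    rw [← Function.iterate_add_apply, add_comm]
    exact (hs t₀ hst₀ (by omega)).2.mpr ht₀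
  obtain ⟨p, hpq, hqp, hp⟩ := exists_T3_iterate_eq_T2_iterate hεl hl1 hvisit
  have hagree : ∀ j < M * q,
      u3 ε ℓ ((T2 ε)^[q] ((T2 ε)^[t₀] x)) j = u3 ε ℓ ((T2 ε)^[t₀] x) j := by
    refine u3_eq_of_letter_T2_iterate_eq hεl hl1 fun t ht => ?_
    simp only [← Function.iterate_add_apply]
    rw [← add_assoc, add_right_comm]
    exact (hs (t + t₀) (by omega) (by omega)).1
  refine ⟨i, p, by omega, fun j hj => ?_⟩
  have hj' : j < M * q := by nlinarith [Nat.mul_le_mul_left M hpq]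
  rw [show i + j + p = i + (p + j) by ring, u3_add ε ℓ x, u3_add ε ℓ x, hi, u3_add, hp,
    hagree j hj']

/-! ### Repetitions for badly approximable numbers -/

lemma T3_iterate_eq (ε ℓ x : ℝ) (p : ℕ) :
    (T3 ε ℓ)^[p] x = x + (∑ j ∈ Finset.range p, wraps (u3 ε ℓ x j) : ℕ) -
      (∑ j ∈ Finset.range p, returnTime (u3 ε ℓ x j) : ℕ) * ε := by
  induction p with
  | zero => simp
  | succ p ih =>
    have hletter : letter ε ℓ ((T3 ε ℓ)^[p] x) = u3 ε ℓ x p := rfl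
    rw [Function.iterate_succ_apply', T3_eq, hletter, ih, Finset.sum_range_succ,
      Finset.sum_range_succ]
    push_cast
    ring

lemma T3_iterate_sub_eq_of_u3_eq {p : ℕ} (h : ∀ j < p, u3 ε ℓ x j = u3 ε ℓ y j) :
    (T3 ε ℓ)^[p] x - x = (T3 ε ℓ)^[p] y - y := by
  have hcongr {β : Type} [AddCommMonoid β] (f : L3 → β) :
      ∑ j ∈ Finset.range p, f (u3 ε ℓ x j) = ∑ j ∈ Finset.range p, f (u3 ε ℓ y j) :=
    Finset.sum_congr rfl fun j hj => by rw [h j (Finset.mem_range.mp hj)]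
  rw [T3_iterate_eq ε ℓ x, T3_iterate_eq ε ℓ y, hcongr, hcongr]
  ring

lemma HasPeriodOn.u3_T3_iterate_mul_eq {p m a j : ℕ} (h : HasPeriodOn (u3 ε ℓ x) p 0 m)
    (hj : a * p + j < m) : u3 ε ℓ ((T3 ε ℓ)^[a * p] x) j = u3 ε ℓ x j := by
  rw [← u3_add]
  simpa using h.apply_mul_add hj

lemma HasPeriodOn.T3_iterate_mul_eq {p m a : ℕ} (h : HasPeriodOn (u3 ε ℓ x) p 0 m)
    (ha : a * p ≤ m) : (T3 ε ℓ)^[a * p] x = x + a * ((T3 ε ℓ)^[p] x - x) := by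
  induction a with
  | zero => simp
  | succ a ih =>
    rw [add_one_mul] at ha
    have hstep := T3_iterate_sub_eq_of_u3_eq (p := p) fun j hj =>
      h.u3_T3_iterate_mul_eq (a := a) (j := j) (by omega)
    rw [add_one_mul, add_comm, Function.iterate_add_apply]
    push_cast
    linear_combination hstep + ih (by omega)

/-- The displacement after `p` steps is an integer minus `qε` with `p ≤ q ≤ 2p`. -/
lemma IsBadlyApproximable.div_two_mul_le_abs_T3_iterate_sub {c : ℝ} (hbad : IsBadlyApproximable c ε)
    (hc : 0 ≤ c) (ℓ x : ℝ) {p : ℕ} (hp : 0 < p) : c / (2 * p) ≤ |(T3 ε ℓ)^[p] x - x| := by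
  set q := ∑ j ∈ Finset.range p, returnTime (u3 ε ℓ x j) with hq
  have hpq : p ≤ q := by
    simpa using Finset.card_nsmul_le_sum (Finset.range p) _ 1 fun j _ =>
      one_le_returnTime (u3 ε ℓ x j)
  have hqp : q ≤ 2 * p := by
    simpa [mul_comm] using Finset.sum_le_card_nsmul (Finset.range p) _ 2 fun j _ =>
      returnTime_le_two (u3 ε ℓ x j)
  have hqpos : (0 : ℝ) < q := by exact_mod_cast hp.trans_le hpq
  calc c / (2 * p) ≤ c / q := by gcongr; exact_mod_cast hqp
    _ ≤ |q * ε - ((∑ j ∈ Finset.range p, wraps (u3 ε ℓ x j) : ℕ) : ℤ)| :=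
      hbad q _ (hp.trans_le hpq)
    _ = |(T3 ε ℓ)^[p] x - x| := by
      rw [T3_iterate_eq, ← hq, abs_sub_comm, Int.cast_natCast]
      congr 1
      ring

lemma floor_sub_eq_neg_one_of_letter_eq_B (hε1 : ε ≤ 1) (hx : 0 ≤ x) (hB : letter ε ℓ x = L3.B) :
    ⌊x - ε⌋ = -1 := by
  have hxε := (letter_eq_B_iff.mp hB).2
  rw [Int.floor_eq_iff]
  push_cast
  constructor <;> linarith

lemma floor_sub_mul_eq_of_u3_eq (hl : max ε (1 - ε) ≤ ℓ) (hl1 : ℓ ≤ 1) (hx : x ∈ Set.Ico 0 ℓ)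
    (hy : y ∈ Set.Ico 0 ℓ) {p : ℕ} (h : ∀ j < p, u3 ε ℓ x j = u3 ε ℓ y j) {t : ℕ} (ht : t ≤ p) :
    ⌊x - t * ε⌋ = ⌊y - t * ε⌋ := by
  induction p generalizing x y t with
  | zero =>
    obtain rfl : t = 0 := by omega
    have hfloor {z : ℝ} (hz : z ∈ Set.Ico 0 ℓ) : ⌊z⌋ = 0 :=
      Int.floor_eq_zero_iff.mpr ⟨hz.1, hz.2.trans_le hl1⟩
    simp [hfloor hx, hfloor hy]
  | succ p ih =>
    have hfirst : letter ε ℓ x = letter ε ℓ y := h 0 (by omega)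
    have hone := one_le_returnTime (letter ε ℓ y)
    have htwo := returnTime_le_two (letter ε ℓ y)
    rcases le_or_gt (returnTime (letter ε ℓ y)) t with hle | hlt
    · obtain ⟨s, rfl⟩ := Nat.exists_eq_add_of_le' hle
      have hstep (z : ℝ) (hz : letter ε ℓ z = letter ε ℓ y) :
          z - (s + returnTime (letter ε ℓ y) : ℕ) * ε =
            T3 ε ℓ z - s * ε - (wraps (letter ε ℓ y) : ℕ) := by
        rw [T3_eq, hz]
        push_cast
        ring
      rw [hstep x hfirst, hstep y rfl, Int.floor_sub_natCast, Int.floor_sub_natCast,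
        ih (mapsTo_T3 hl hl1 hx) (mapsTo_T3 hl hl1 hy) (fun j hj => h (j + 1) (by omega))
          (by omega)]
    rcases t.eq_zero_or_pos with rfl | hpos
    · exact ih hx hy (fun j hj => h j (by omega)) (Nat.zero_le p)
    obtain rfl : t = 1 := by omega
    have hyB := eq_B_of_one_lt_returnTime hlt
    have hε1 := (le_of_max_le_left hl).trans hl1
    rw [Nat.cast_one, one_mul, floor_sub_eq_neg_one_of_letter_eq_B hε1 hx.1 (hfirst.trans hyB),
      floor_sub_eq_neg_one_of_letter_eq_B hε1 hy.1 hyB]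

lemma IsBadlyApproximable.abs_sub_le_of_u3_eq {c : ℝ} (hbad : IsBadlyApproximable c ε) (hc : 0 < c)
    (hl : max ε (1 - ε) ≤ ℓ) (hl1 : ℓ ≤ 1) (hx : x ∈ Set.Ico 0 ℓ) (hy : y ∈ Set.Ico 0 ℓ) {p : ℕ}
    (hp : 0 < p) (h : ∀ j < p, u3 ε ℓ x j = u3 ε ℓ y j) : |x - y| ≤ 3 / (c * p) := by
  wlog hyx : y ≤ x generalizing x y
  · rw [abs_sub_comm]
    exact this hy hx (fun j hj => (h j hj).symm) (le_of_not_ge hyx)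
  rw [abs_of_nonneg (sub_nonneg.mpr hyx)]
  by_contra! hlt
  obtain ⟨t, htp, m, hym, hmx⟩ := hbad.exists_nat_mul_add_int_mem_Ioc hc hp hlt.le
  have hlow : ⌊y - t * ε⌋ < m := Int.floor_lt.mpr (by linarith)
  have hhigh : m ≤ ⌊x - t * ε⌋ := Int.le_floor.mpr (by linarith)
  exact (hlow.trans_le hhigh).ne' (floor_sub_mul_eq_of_u3_eq hl hl1 hx hy h htp)

/-- The first and last points of the arithmetic progression of block starts are coded alike for
`p` steps, hence `O(1 / p)`-close, while its difference is at least of order `1 / p`. -/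
lemma IsBadlyApproximable.le_of_hasPeriodOn_zero {c : ℝ} (hbad : IsBadlyApproximable c ε)
    (hc : 0 < c) (hl : max ε (1 - ε) ≤ ℓ) (hl1 : ℓ ≤ 1) (hx : x ∈ Set.Ico 0 ℓ) {a p m : ℕ}
    (hp : 0 < p) (h : HasPeriodOn (u3 ε ℓ x) p 0 m) (ha : (a + 1) * p ≤ m) :
    (a : ℝ) ≤ 6 / c ^ 2 := by
  rw [add_one_mul] at ha
  have hclose : |(T3 ε ℓ)^[a * p] x - x| ≤ 3 / (c * p) :=
    hbad.abs_sub_le_of_u3_eq hc hl hl1 ((mapsTo_T3 hl hl1).iterate _ hx) hx hp fun j hj =>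
      h.u3_T3_iterate_mul_eq (by omega)
  rw [h.T3_iterate_mul_eq (by omega), add_sub_cancel_left, abs_mul, Nat.abs_cast] at hclose
  have hstep := hbad.div_two_mul_le_abs_T3_iterate_sub hc.le ℓ x hp
  have : (0 : ℝ) < p := by exact_mod_cast hp
  calc (a : ℝ) = a * (c / (2 * p)) * (2 * p / c) := by field_simp
    _ ≤ a * |(T3 ε ℓ)^[p] x - x| * (2 * p / c) := by gcongr
    _ ≤ 3 / (c * p) * (2 * p / c) := by gcongr
    _ = 6 / c ^ 2 := by field_simp; norm_num

lemma IsBadlyApproximable.div_le_of_hasPeriodOn {c : ℝ} (hbad : IsBadlyApproximable c ε)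
    (hc : 0 < c) (hl : max ε (1 - ε) ≤ ℓ) (hl1 : ℓ ≤ 1) (hx : x ∈ Set.Ico 0 ℓ) {n p m : ℕ}
    (hp : 0 < p) (h : HasPeriodOn (u3 ε ℓ x) p n m) : (m / p : ℝ) ≤ 6 / c ^ 2 + 2 := by
  have hshift : HasPeriodOn (u3 ε ℓ ((T3 ε ℓ)^[n] x)) p 0 m := fun j hj => by
    simpa [← u3_add, add_assoc] using h j hj
  have hle : ((m / p - 1 : ℕ) : ℝ) ≤ 6 / c ^ 2 := by
    rcases lt_or_ge m p with hmp | hpm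
    · rw [Nat.div_eq_of_lt hmp, Nat.zero_sub, Nat.cast_zero]
      positivity
    · refine hbad.le_of_hasPeriodOn_zero hc hl hl1 ((mapsTo_T3 hl hl1).iterate n hx) hp hshift ?_
      rw [Nat.sub_add_cancel (Nat.div_pos hpm hp)]
      exact Nat.div_mul_le_self m p
  have hlt : m < (m / p - 1 + 2) * p :=
    (Nat.lt_mul_of_div_lt (Nat.lt_succ_self _) hp).trans_le (Nat.mul_le_mul_right p (by omega))
  have hp' : (0 : ℝ) < p := by exact_mod_cast hp
  rw [div_le_iff₀ hp']
  calc (m : ℝ) ≤ ((m / p - 1 : ℕ) + 2) * p := by exact_mod_cast hlt.le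
    _ ≤ (6 / c ^ 2 + 2) * p := by gcongr

/-- At `ℓ = max ε (1 - ε)` and at `ℓ = 1` one of the three intervals is empty and the word is
Sturmian. -/
theorem threeIet_finite_index_iff_bounded_partial_quotients_general {ε ℓ x0 : ℝ}
    (hirr : Irrational ε) (hl : max ε (1 - ε) ≤ ℓ) (hl1 : ℓ ≤ 1) (hx0 : x0 ∈ Set.Ico 0 ℓ) :
    wordIndex (u3 ε ℓ x0) < ⊤ ↔ ∃ K : ℕ, ∀ n : ℕ, cfa ε n ≤ K := by
  have h0 : 0 < ε := hirr.ne_zero.lt_of_le' (by linarith [le_of_max_le_right hl])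
  have h1 : ε < 1 := hirr.ne_one.lt_of_le ((le_of_max_le_left hl).trans hl1)
  rw [wordIndex_lt_top_iff]
  constructor
  · rintro ⟨C, hC⟩
    obtain ⟨M, hM⟩ := exists_nat_ge C
    refine ⟨10 * (M + 1), fun n => ?_⟩
    by_contra! hlarge
    obtain ⟨i, p, hp, hperiod⟩ :=
      exists_hasPeriodOn_of_le_cfa hirr h0 h1 hl hl1 ⟨hx0.1, hx0.2.trans_le hl1⟩ hlarge.le
    have hexp := hC i p ((M + 1) * p) hp (Nat.le_mul_of_pos_left p M.succ_pos) hperiod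
    rw [Nat.cast_mul, mul_div_cancel_right₀ _ (by positivity), Nat.cast_add_one] at hexp
    linarith
  · rintro ⟨K, hK⟩
    have hbad := isBadlyApproximable_of_cfa_le hirr h0 h1 hK
    exact ⟨_, fun n p m hp _ h =>
      hbad.div_le_of_hasPeriodOn (by positivity) hl hl1 hx0 hp h⟩

/-- a 3iet word has finite index iff the partial quotients of `ε` are bounded. -/
theorem threeIet_finite_index_iff_bounded_partial_quotients
    (ε ℓ x0 : ℝ) (hirr : Irrational ε) (h0 : 0 < ε) (h1 : ε < 1)
    (hl : max ε (1 - ε) < ℓ) (hl1 : ℓ < 1) (hx0 : x0 ∈ Set.Ico 0 ℓ) :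
    wordIndex (u3 ε ℓ x0) < ⊤ ↔ ∃ K : ℕ, ∀ n : ℕ, cfa ε n ≤ K :=
  threeIet_finite_index_iff_bounded_partial_quotients_general hirr hl.le hl1.le hx0
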